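/- arXiv:2011.12573 — 2 statements merged into one kernel-verified Lean document; each statement's English description precedes it below -/
import Mathlib

section
/- Let R be a commutative ring, n ≥ 1, and A an n×n matrix over R with characteristic polynomial coefficients c_i and Faddeev–Leverrier matrices B_k (B_0 = I, B_k = A·B_{k-1} + c_{n-k}·I). Then for every k with 0 ≤ k ≤ n, Tr(B_k) = (n−k)·c_{n−k}. -/
noncomputable def flSeq {R : Type*} [CommRing R] {n : ℕ}
    (A : Matrix (Fin n) (Fin n) R) : ℕ → Matrix (Fin n) (Fin n) R
  | 0 => 1
  | k + 1 => A * flSeq A k + (A.charpoly.coeff (n - (k + 1))) • 1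

/-! Comparing coefficients in `(X - A) * adj (X - A) = charpoly A` shows that the coefficients of
`X * adj (X - A)`, read from the top, satisfy the recursion defining the Faddeev–Leverrier matrices.
By Jacobi's formula the trace of `X * adj (X - A)` is `X * (charpoly A)'`, whose `m`-th coefficient
is `m * c_m`. The extra factor `X` covers `k = n`, which is then the Cayley–Hamilton theorem. -/

section Jacobi

open Equiv Finset Matrix

theorem derivation_prod {R S M ι : Type*} [CommSemiring R] [CommSemiring S] [Algebra R S]
    [AddCommMonoid M] [Module R M] [Module S M] [DecidableEq ι]
    (D : Derivation R S M) (s : Finset ι) (f : ι → S) :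
    D (∏ i ∈ s, f i) = ∑ i ∈ s, (∏ j ∈ s.erase i, f j) • D (f i) := by
  induction s using Finset.induction_on with
  | empty => simp
  | insert a s ha ih =>
    have prod_erase_insert : ∀ i ∈ s,
        ∏ j ∈ (insert a s).erase i, f j = f a * ∏ j ∈ s.erase i, f j := fun i hi => by
      rw [erase_insert_of_ne (ne_of_mem_of_not_mem hi ha).symm,
        prod_insert fun h => ha (mem_of_mem_erase h)]
    rw [prod_insert ha, D.leibniz, ih, sum_insert ha, erase_insert ha, smul_sum, add_comm]
    congr 1
    exact sum_congr rfl fun i hi => by rw [prod_erase_insert i hi, mul_smul]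

variable {n S : Type*} [Fintype n] [DecidableEq n] [CommRing S]

theorem adjugate_apply_eq_sum_perm (N : Matrix n n S) (i j : n) :
    N.adjugate i j = ∑ σ : Perm n,
      if σ i = j then Perm.sign σ • ∏ k ∈ univ.erase i, N (σ k) k else 0 := by
  rw [← transpose_apply N.adjugate, adjugate_transpose, adjugate_apply, updateRow_transpose,
    det_transpose, det_apply]
  refine sum_congr rfl fun σ _ => ?_
  have prod_off_column : ∏ k ∈ univ.erase i, N.updateCol i (Pi.single j 1) (σ k) k =
      ∏ k ∈ univ.erase i, N (σ k) k :=
    prod_congr rfl fun k hk => updateCol_ne (ne_of_mem_erase hk)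
  rw [← mul_prod_erase _ _ (mem_univ i), updateCol_self, prod_off_column, Pi.single_apply]
  split_ifs <;> simp

theorem derivation_det_eq_sum_adjugate_smul {R M : Type*} [CommSemiring R] [Algebra R S]
    [AddCommGroup M] [Module R M] [Module S M] (D : Derivation R S M) (N : Matrix n n S) :
    D N.det = ∑ i, ∑ j, N.adjugate i j • D (N j i) := by
  have expand_column (i : n) : ∑ j, N.adjugate i j • D (N j i) =
      ∑ σ : Perm n, Perm.sign σ • (∏ k ∈ univ.erase i, N (σ k) k) • D (N (σ i) i) := by
    simp only [adjugate_apply_eq_sum_perm, sum_smul, ite_smul, zero_smul]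
    rw [sum_comm]
    simp [Units.smul_def, mul_smul, Int.cast_smul_eq_zsmul]
  simp only [expand_column]
  rw [sum_comm, det_apply, map_sum]
  refine sum_congr rfl fun σ _ => ?_
  rw [Units.smul_def, map_zsmul, derivation_prod, smul_sum]
  rfl

end Jacobi

open Matrix Polynomial

section AdjugatePoly

variable {R n : Type*} [CommRing R] [Fintype n] [DecidableEq n] (A : Matrix n n R)

theorem derivative_charpoly_eq_trace_adjugate :
    derivative A.charpoly = A.charmatrix.adjugate.trace := by
  have derivative_charmatrix (i j : n) :
      derivative (A.charmatrix j i) = if i = j then 1 else 0 := by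
    split_ifs with h
    · simp [h]
    · simp [charmatrix_apply_ne _ _ _ (Ne.symm h)]
  have jacobi := derivation_det_eq_sum_adjugate_smul derivative' A.charmatrix
  simpa [charpoly, trace, derivative_charmatrix] using jacobi

theorem trace_coeff_matPolyEquiv (M : Matrix n n R[X]) (m : ℕ) :
    ((matPolyEquiv M).coeff m).trace = M.trace.coeff m := by
  simp [trace, matPolyEquiv_coeff_apply]

/-- The adjugate of the characteristic matrix `X - A`, encoded as a polynomial with matrix
coefficients so that the Faddeev–Leverrier matrices `B_{n-1}, …, B_0` are its coefficients. -/
noncomputable def adjugatePoly : (Matrix n n R)[X] :=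
  matPolyEquiv A.charmatrix.adjugate

theorem X_sub_C_mul_adjugatePoly :
    (X - C A) * adjugatePoly A = A.charpoly.map (algebraMap R (Matrix n n R)) := by
  rw [adjugatePoly, ← matPolyEquiv_charmatrix, ← map_mul, mul_adjugate, ← charpoly,
    matPolyEquiv_smul_one]

theorem degree_adjugatePoly_lt : (adjugatePoly A).degree < Fintype.card n := by
  by_cases h : adjugatePoly A = 0
  · simp [h]
  nontriviality R
  have : Nontrivial (Matrix n n R)[X] := ⟨_, _, h⟩
  have : Nontrivial (Matrix n n R) := nontrivial_iff.mp this
  have natDegree_add_one_le : 1 + (adjugatePoly A).natDegree ≤ Fintype.card n :=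
    calc 1 + (adjugatePoly A).natDegree = ((X - C A) * adjugatePoly A).natDegree := by
          rw [(monic_X_sub_C A).natDegree_mul' h, natDegree_X_sub_C]
      _ ≤ A.charpoly.natDegree := by
          rw [X_sub_C_mul_adjugatePoly]; exact natDegree_map_le
      _ = Fintype.card n := A.charpoly_natDegree_eq_dim
  exact (natDegree_lt_iff_degree_lt h).mp (by lia)

theorem coeff_X_mul_adjugatePoly (m : ℕ) :
    (X * adjugatePoly A).coeff m =
      A * (X * adjugatePoly A).coeff (m + 1) + A.charpoly.coeff m • 1 := by
  have h : X * adjugatePoly A =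
      C A * adjugatePoly A + A.charpoly.map (algebraMap R (Matrix n n R)) := by
    rw [← X_sub_C_mul_adjugatePoly, sub_mul, add_sub_cancel]
  rw [coeff_X_mul, h, coeff_add, coeff_C_mul, coeff_map, Algebra.algebraMap_eq_smul_one]

theorem coeff_card_X_mul_adjugatePoly :
    (X * adjugatePoly A).coeff (Fintype.card n) = 1 := by
  have coeff_charpoly : A.charpoly.coeff (Fintype.card n) = 1 := by
    nontriviality R
    rw [← A.charpoly_natDegree_eq_dim]
    exact A.charpoly_monic
  rw [coeff_X_mul_adjugatePoly, coeff_X_mul, coeff_eq_zero_of_degree_lt (degree_adjugatePoly_lt A),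
    coeff_charpoly, mul_zero, zero_add, one_smul]

theorem trace_coeff_X_mul_adjugatePoly (m : ℕ) :
    ((X * adjugatePoly A).coeff m).trace = m * A.charpoly.coeff m := by
  cases m with
  | zero => simp
  | succ m =>
    rw [coeff_X_mul, adjugatePoly, trace_coeff_matPolyEquiv,
      ← derivative_charpoly_eq_trace_adjugate, coeff_derivative, Nat.cast_succ, mul_comm]

end AdjugatePoly

theorem flSeq_eq_coeff_X_mul_adjugatePoly {R : Type*} [CommRing R] {n : ℕ}
    (A : Matrix (Fin n) (Fin n) R) {k : ℕ} (hk : k ≤ n) :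
    flSeq A k = (X * adjugatePoly A).coeff (n - k) := by
  induction k with
  | zero => simpa [flSeq] using (coeff_card_X_mul_adjugatePoly A).symm
  | succ k ih =>
    rw [flSeq, ih (by lia), coeff_X_mul_adjugatePoly A (n - (k + 1)),
      show n - (k + 1) + 1 = n - k by lia]

theorem stmt2 {R : Type*} [CommRing R] {n : ℕ} (hn : 1 ≤ n)
    (A : Matrix (Fin n) (Fin n) R) :
    ∀ k ≤ n, Matrix.trace (flSeq A k) = ((n - k : ℕ) : R) * A.charpoly.coeff (n - k) := by
  intro k hk
  rw [flSeq_eq_coeff_X_mul_adjugatePoly A hk, trace_coeff_X_mul_adjugatePoly]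
end

section
/- Let R be a commutative ring, n ≥ 1, and A an n×n matrix over R with characteristic polynomial coefficients c_i and Faddeev–Leverrier matrices B_k (B_0 = I, B_k = A·B_{k-1} + c_{n-k}·I). Then in the ring of n×n matrices over the polynomial ring R[x], the adjugate of the characteristic matrix x·I − A satisfies adj(x·I − A) = Σ_{k=0}^{n−1} B_k·x^{n−1−k}, where each B_k is regarded as a matrix of constant polynomials. -/
/-!
Identify matrices over `R[x]` with polynomials over the matrix ring. There
`(xI - A) * adj (xI - A) = det (xI - A) • I` says that the adjugate is the quotient of the
characteristic polynomial by the monic linear polynomial `x - A`. Division by `x - A` is Horner's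
scheme: the coefficients `q_j` of the quotient satisfy `q_j = c_{j+1} + A q_{j+1}`. Read from the
top coefficient downwards, this is the Faddeev–Leverrier recursion, so `q_{n-1-k} = B_k`.
-/

section

open Polynomial

theorem coeff_divByMonic_X_sub_C_of_natDegree_le_succ {S : Type*} [Ring S] {p : S[X]} (a : S)
    {k : ℕ} (hp : p.natDegree ≤ k + 1) : (p /ₘ (X - C a)).coeff k = p.coeff (k + 1) := by
  have coeff_succ_eq_zero : (p /ₘ (X - C a)).coeff (k + 1) = 0 := by
    rw [coeff_divByMonic_X_sub_C, Finset.Icc_eq_empty (by lia), Finset.sum_empty]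
  rw [coeff_divByMonic_X_sub_C_rec, coeff_succ_eq_zero, mul_zero, add_zero]

variable {R m : Type*} [Fintype m] [DecidableEq m]

theorem eq_sum_X_pow_smul_coeff_matPolyEquiv [CommSemiring R] (M : Matrix m m R[X]) {n : ℕ}
    (hM : (matPolyEquiv M).natDegree < n) :
    M = ∑ k ∈ Finset.range n, (X : R[X]) ^ k • ((matPolyEquiv M).coeff k).map C := by
  apply matPolyEquiv.injective
  simp only [map_sum, matPolyEquiv_map_smul, matPolyEquiv_map_C, Polynomial.map_pow, map_X,
    X_pow_mul_C]
  exact as_sum_range_C_mul_X_pow' _ hM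

variable [CommRing R] (A : Matrix m m R)

theorem charpoly_natDegree_le_card : A.charpoly.natDegree ≤ Fintype.card m := by
  nontriviality R
  exact A.charpoly_natDegree_eq_dim.le

theorem charpoly_coeff_card : A.charpoly.coeff (Fintype.card m) = 1 := by
  nontriviality R
  rw [← A.charpoly_natDegree_eq_dim]
  exact A.charpoly_monic.coeff_natDegree

theorem matPolyEquiv_adjugate_charmatrix :
    matPolyEquiv A.charmatrix.adjugate =
      A.charpoly.map (algebraMap R (Matrix m m R)) /ₘ (X - C A) := by
  have factorization : (X - C A) * matPolyEquiv A.charmatrix.adjugate =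
      A.charpoly.map (algebraMap R (Matrix m m R)) := by
    rw [← Matrix.matPolyEquiv_charmatrix, ← map_mul, Matrix.mul_adjugate, ← Matrix.charpoly,
      matPolyEquiv_smul_one]
  rw [← factorization, mul_divByMonic_cancel_left _ (monic_X_sub_C A)]

theorem natDegree_matPolyEquiv_adjugate_charmatrix_le :
    (matPolyEquiv A.charmatrix.adjugate).natDegree ≤ Fintype.card m - 1 := by
  nontriviality Matrix m m R
  rw [matPolyEquiv_adjugate_charmatrix, natDegree_divByMonic _ (monic_X_sub_C A),
    natDegree_X_sub_C]
  exact Nat.sub_le_sub_right (natDegree_map_le.trans (charpoly_natDegree_le_card A)) 1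

theorem flSeq_eq_coeff_matPolyEquiv_adjugate_charmatrix {n k : ℕ} (A : Matrix (Fin n) (Fin n) R)
    (hk : k < n) : flSeq A k = (matPolyEquiv A.charmatrix.adjugate).coeff (n - 1 - k) := by
  rw [matPolyEquiv_adjugate_charmatrix]
  induction k with
  | zero =>
    have index_eq : n - 1 - 0 + 1 = Fintype.card (Fin n) := by rw [Fintype.card_fin]; lia
    rw [coeff_divByMonic_X_sub_C_of_natDegree_le_succ A
        (natDegree_map_le.trans (index_eq ▸ charpoly_natDegree_le_card A)),
      index_eq, coeff_map, charpoly_coeff_card, map_one, flSeq]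
  | succ k ih =>
    have index_eq : n - 1 - (k + 1) + 1 = n - 1 - k := by lia
    have coeff_index_eq : n - (k + 1) = n - 1 - k := by lia
    rw [flSeq, ih (by lia), coeff_divByMonic_X_sub_C_rec _ A (n - 1 - (k + 1)), index_eq,
      coeff_index_eq, coeff_map, Algebra.algebraMap_eq_smul_one, add_comm]

end

theorem stmt7 {R : Type*} [CommRing R] {n : ℕ} (hn : 1 ≤ n)
    (A : Matrix (Fin n) (Fin n) R) :
    (Matrix.charmatrix A).adjugate =
      ∑ k ∈ Finset.range n,
        (Polynomial.X : Polynomial R) ^ (n - 1 - k) • (flSeq A k).map Polynomial.C := by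
  have natDegree_lt : (matPolyEquiv A.charmatrix.adjugate).natDegree < n := by
    have := natDegree_matPolyEquiv_adjugate_charmatrix_le A
    rw [Fintype.card_fin] at this
    lia
  calc A.charmatrix.adjugate
      = ∑ k ∈ Finset.range n, (Polynomial.X : Polynomial R) ^ k •
          ((matPolyEquiv A.charmatrix.adjugate).coeff k).map Polynomial.C :=
        eq_sum_X_pow_smul_coeff_matPolyEquiv _ natDegree_lt
    _ = ∑ k ∈ Finset.range n, (Polynomial.X : Polynomial R) ^ (n - 1 - k) •
          ((matPolyEquiv A.charmatrix.adjugate).coeff (n - 1 - k)).map Polynomial.C :=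
        (Finset.sum_range_reflect _ n).symm
    _ = ∑ k ∈ Finset.range n,
          (Polynomial.X : Polynomial R) ^ (n - 1 - k) • (flSeq A k).map Polynomial.C :=
        Finset.sum_congr rfl fun k hk => by
          rw [flSeq_eq_coeff_matPolyEquiv_adjugate_charmatrix A (Finset.mem_range.mp hk)]
end
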